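/- arXiv:1704.07078 — 3 statements merged into one kernel-verified Lean document; each statement's English description precedes it below -/
import Mathlib

section
/- Let G be a finite simple graph of order n that is neither complete nor empty. If G satisfies (k,1)-adjacency anonymity, then k ≤ ⌊(n−1)/2⌋. -/
open Finset

variable {V : Type*}

/-- The adjacency function: 0 if equal, 1 if adjacent, 2 otherwise. -/
def adjFn [DecidableEq V] (G : SimpleGraph V) [DecidableRel G.Adj] (u v : V) : ℕ :=
  if u = v then 0 else if G.Adj u v then 1 else 2

/-- The equivalence class of `x` outside `S` under equality of adjacency
representations with respect to `S`. -/
def adjClass [DecidableEq V] (G : SimpleGraph V) [DecidableRel G.Adj] (S : Set V) (x : V) :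
    Set V :=
  {y | y ∉ S ∧ ∀ s ∈ S, adjFn G s x = adjFn G s y}

/-- `S` is a `k`-adjacency antiresolving set of `G`: `S` is a proper nonempty subset of the
vertex set and `k` is the minimum cardinality of an equivalence class of the relation
"having equal adjacency representation with respect to `S`" on the complement of `S`. -/
def IsAdjAntiresolvingSet [DecidableEq V] (G : SimpleGraph V) [DecidableRel G.Adj]
    (S : Set V) (k : ℕ) : Prop :=
  S.Nonempty ∧ S ≠ Set.univ ∧ 0 < k ∧
    (∀ x ∉ S, k ≤ (adjClass G S x).ncard) ∧
    (∃ x ∉ S, (adjClass G S x).ncard = k)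

/-- `G` satisfies `(k,ℓ)`-adjacency anonymity: `k` is the smallest positive integer such that
the `k`-adjacency antidimension of `G` (minimum cardinality of a `k`-adjacency antiresolving
set) is at most `ℓ`. -/
def AdjAnonymous [DecidableEq V] (G : SimpleGraph V) [DecidableRel G.Adj] (k ℓ : ℕ) : Prop :=
  0 < k ∧ (∃ S : Set V, IsAdjAntiresolvingSet G S k ∧ S.ncard ≤ ℓ) ∧
    ∀ k' : ℕ, 0 < k' → (∃ S : Set V, IsAdjAntiresolvingSet G S k' ∧ S.ncard ≤ ℓ) → k ≤ k'

/-!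
A graph that is neither complete nor empty has a vertex `v` with both a neighbour and a
non-neighbour. The adjacency classes with respect to `{v}` are then exactly the neighbourhoods of
`v` in `G` and in `Gᶜ`. Their sizes add up to `n - 1`, so the smaller of them has at most
`⌊(n - 1) / 2⌋` elements, and minimality bounds `k` by its size.
-/

theorem exists_adj_compl_adj {G : SimpleGraph V} (hbot : G ≠ ⊥) (htop : G ≠ ⊤) :
    ∃ v a b, G.Adj v a ∧ Gᶜ.Adj v b := by
  obtain ⟨u, w, huw⟩ := SimpleGraph.ne_bot_iff_exists_adj.1 hbot
  obtain ⟨x, y, hxy⟩ : ∃ x y, Gᶜ.Adj x y := SimpleGraph.ne_top_iff_exists_not_adj.1 htop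
  by_cases hux : u = x
  · exact ⟨u, w, y, huw, hux ▸ hxy⟩
  by_cases hadj : G.Adj x u
  · exact ⟨x, u, y, hadj, hxy⟩
  · exact ⟨u, w, x, huw, hux, mt SimpleGraph.Adj.symm hadj⟩

theorem ncard_neighborSet (H : SimpleGraph V) (v : V) [Fintype (H.neighborSet v)] :
    (H.neighborSet v).ncard = H.degree v := by
  rw [← H.coe_neighborFinset, Set.ncard_coe_finset, H.card_neighborFinset_eq_degree]

section Anonymity

variable [DecidableEq V] {G : SimpleGraph V} [DecidableRel G.Adj] {u v a b : V} {k k' ℓ : ℕ}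

theorem adjFn_eq_one_iff : adjFn G u v = 1 ↔ G.Adj u v := by
  unfold adjFn
  split_ifs <;> simp_all

theorem adjFn_eq_two_iff : adjFn G u v = 2 ↔ Gᶜ.Adj u v := by
  unfold adjFn
  split_ifs <;> simp_all

theorem mem_adjClass_singleton : b ∈ adjClass G {v} a ↔ b ≠ v ∧ adjFn G v b = adjFn G v a := by
  simp [adjClass, eq_comm]

theorem adjClass_singleton_of_adj (h : G.Adj v a) : adjClass G {v} a = G.neighborSet v := by
  ext b
  rw [mem_adjClass_singleton, adjFn_eq_one_iff.2 h, adjFn_eq_one_iff]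
  exact and_iff_right_of_imp SimpleGraph.Adj.ne'

theorem adjClass_singleton_of_compl_adj (h : Gᶜ.Adj v a) :
    adjClass G {v} a = Gᶜ.neighborSet v := by
  ext b
  rw [mem_adjClass_singleton, adjFn_eq_two_iff.2 h, adjFn_eq_two_iff]
  exact and_iff_right_of_imp SimpleGraph.Adj.ne'

theorem isAdjAntiresolvingSet_singleton [Fintype V] (ha : G.Adj v a) (hb : Gᶜ.Adj v b) :
    IsAdjAntiresolvingSet G {v} (min (G.degree v) (Gᶜ.degree v)) := by
  have card_of_adj {x : V} (hx : G.Adj v x) : (adjClass G {v} x).ncard = G.degree v := by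
    rw [adjClass_singleton_of_adj hx, ncard_neighborSet]
  have card_of_compl_adj {x : V} (hx : Gᶜ.Adj v x) : (adjClass G {v} x).ncard = Gᶜ.degree v := by
    rw [adjClass_singleton_of_compl_adj hx, ncard_neighborSet]
  refine ⟨Set.singleton_nonempty v, ?proper, lt_min ha.degree_pos_left hb.degree_pos_left,
    ?lower, ?attained⟩
  case proper => exact (Set.ne_univ_iff_exists_notMem _).2 ⟨a, ha.ne'⟩
  case lower =>
    intro x hxv
    by_cases hx : G.Adj v x
    · exact (min_le_left _ _).trans_eq (card_of_adj hx).symm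
    · exact (min_le_right _ _).trans_eq (card_of_compl_adj ⟨Ne.symm hxv, hx⟩).symm
  case attained =>
    rcases min_choice (G.degree v) (Gᶜ.degree v) with hmin | hmin
    · exact ⟨a, ha.ne', (card_of_adj ha).trans hmin.symm⟩
    · exact ⟨b, hb.ne', (card_of_compl_adj hb).trans hmin.symm⟩

theorem AdjAnonymous.pos [Finite V] (h : AdjAnonymous G k ℓ) : 0 < ℓ := by
  obtain ⟨-, ⟨S, ⟨hS, -⟩, hSℓ⟩, -⟩ := h
  exact hS.ncard_pos.trans_le hSℓ

theorem AdjAnonymous.le (h : AdjAnonymous G k ℓ) {S : Set V} (hS : IsAdjAntiresolvingSet G S k')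
    (hSℓ : S.ncard ≤ ℓ) : k ≤ k' :=
  h.2.2 k' hS.2.2.1 ⟨S, hS, hSℓ⟩

end Anonymity

theorem stmt0_general [Fintype V] [DecidableEq V] (G : SimpleGraph V) [DecidableRel G.Adj]
    (hbot : G ≠ ⊥) (htop : G ≠ ⊤) (k ℓ : ℕ) (hG : AdjAnonymous G k ℓ) :
    k ≤ (Fintype.card V - 1) / 2 := by
  obtain ⟨v, a, b, ha, hb⟩ := exists_adj_compl_adj hbot htop
  have hk : k ≤ min (G.degree v) (Gᶜ.degree v) :=
    hG.le (isAdjAntiresolvingSet_singleton ha hb) ((Set.ncard_singleton v).trans_le hG.pos)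
  have hsum : Gᶜ.degree v = Fintype.card V - 1 - G.degree v := G.degree_compl v
  omega

/-- if a finite simple graph `G` of order `n` that is neither complete nor empty
satisfies `(k,1)`-adjacency anonymity, then `k ≤ ⌊(n-1)/2⌋`. -/
theorem stmt0 [Fintype V] [DecidableEq V] (G : SimpleGraph V) [DecidableRel G.Adj]
    (hnonempty : ∃ u v : V, G.Adj u v)
    (hnoncomplete : ∃ u v : V, u ≠ v ∧ ¬ G.Adj u v)
    (k : ℕ) (hG : AdjAnonymous G k 1) :
    k ≤ (Fintype.card V - 1) / 2 := by
  exact stmt0_general G (SimpleGraph.ne_bot_iff_exists_adj.2 hnonempty)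
    (SimpleGraph.ne_top_iff_exists_not_adj.2 hnoncomplete) k 1 hG
end

section
/- Let G = (V,E) be a finite simple graph of order n and let k be a positive integer with k ≤ ⌊(n−1)/2⌋. Then there exists a graph G' = (V,E') on the same vertex set with E ⊆ E' such that every vertex u with 1 ≤ deg_G(u) < k satisfies deg_{G'}(u) ≥ k, and the number of added edges satisfies |E' ∖ E| ≤ Σ_{u ∈ V, 1 ≤ deg_G(u) < k} (k − deg_G(u)). -/
open Finset
open scoped Classical

/-!
A vertex `u` whose degree falls short of its target by `d` still has at least `d` non-neighbours, as
long as the target is smaller than the order of the graph. Join every target vertex to as many of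
its non-neighbours as it lacks: degrees never decrease, so all targets are met, and the number of
new edges is at most the number of chosen pairs, which is the total shortfall.
-/

section

variable {V : Type*} (G : SimpleGraph V)

lemma encard_neighborSet_eq_degree (u : V) [Fintype (G.neighborSet u)] :
    (G.neighborSet u).encard = G.degree u := by
  rw [Set.encard_eq_coe_toFinset_card, Set.toFinset_card, G.card_neighborSet_eq_degree]

lemma encard_edgeSet_sdiff_edgeSet (H : SimpleGraph V) [DecidableEq (Sym2 V)]
    [Fintype G.edgeSet] [Fintype H.edgeSet] :
    (G.edgeSet \ H.edgeSet).encard = (G.edgeFinset \ H.edgeFinset).card := by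
  rw [← Set.encard_coe_eq_coe_finsetCard, Finset.coe_sdiff, SimpleGraph.coe_edgeFinset,
    SimpleGraph.coe_edgeFinset]

lemma encard_neighborSet_add_encard_neighborSet_compl_add_one (u : V) :
    (G.neighborSet u).encard + (Gᶜ.neighborSet u).encard + 1 = ENat.card V := by
  have hu : u ∉ G.neighborSet u ∪ Gᶜ.neighborSet u := by simp
  have hins : insert u (G.neighborSet u ∪ Gᶜ.neighborSet u) = Set.univ := by
    ext v
    by_cases huv : u = v <;> simp [huv, eq_comm, em]
  rw [← Set.encard_union_eq (G.compl_neighborSet_disjoint u), ← Set.encard_insert_of_notMem hu,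
    hins, Set.encard_univ]

lemma exists_subset_neighborSet_compl_encard_eq (u : V) {k : ℕ} (hk : k < ENat.card V) :
    ∃ A ⊆ Gᶜ.neighborSet u, A.encard = k - (G.neighborSet u).encard := by
  refine Set.exists_subset_encard_eq (tsub_le_iff_left.2 ?_)
  rw [← encard_neighborSet_add_encard_neighborSet_compl_add_one G u] at hk
  exact Order.le_of_lt_add_one hk

lemma encard_neighborSet_add_encard_le_sup_fromRel {r : V → V → Prop} {u : V}
    (hr : {v | r u v} ⊆ Gᶜ.neighborSet u) :
    (G.neighborSet u).encard + {v | r u v}.encard ≤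
      ((G ⊔ SimpleGraph.fromRel r).neighborSet u).encard := by
  rw [← Set.encard_union_eq ((G.compl_neighborSet_disjoint u).mono_right hr),
    SimpleGraph.neighborSet_sup]
  have hsub : {v | r u v} ⊆ (SimpleGraph.fromRel r).neighborSet u :=
    fun v huv => (SimpleGraph.fromRel_adj r u v).2 ⟨Gᶜ.ne_of_adj (hr huv), Or.inl huv⟩
  exact Set.encard_le_encard (Set.union_subset_union_right _ hsub)

lemma encard_edgeSet_fromRel_le_sum {r : V → V → Prop} {S : Finset V}
    (hr : ∀ u v, r u v → u ∈ S) :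
    (SimpleGraph.fromRel r).edgeSet.encard ≤ ∑ u ∈ S, {v | r u v}.encard := by
  have hsub : (SimpleGraph.fromRel r).edgeSet ⊆ ⋃ u ∈ S, (s(u, ·)) '' {v | r u v} := by
    rintro ⟨x, y⟩ hxy
    rcases ((SimpleGraph.fromRel_adj r x y).1 hxy).2 with h | h
    · exact Set.mem_biUnion (hr x y h) ⟨y, h, rfl⟩
    · exact Set.mem_biUnion (hr y x h) ⟨x, h, Sym2.eq_swap⟩
  calc (SimpleGraph.fromRel r).edgeSet.encard
      ≤ (⋃ u ∈ S, (s(u, ·)) '' {v | r u v}).encard := Set.encard_le_encard hsub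
    _ ≤ ∑ u ∈ S, ((s(u, ·)) '' {v | r u v}).encard := S.set_encard_biUnion_le _
    _ ≤ ∑ u ∈ S, {v | r u v}.encard := Finset.sum_le_sum fun _ _ => Set.encard_image_le _ _

theorem stmt5_general (S : Finset V) (k : V → ℕ) (hk : ∀ u ∈ S, k u < ENat.card V) :
    ∃ G' : SimpleGraph V, G ≤ G' ∧
      (∀ u ∈ S, k u ≤ (G'.neighborSet u).encard) ∧
      (G'.edgeSet \ G.edgeSet).encard ≤ ∑ u ∈ S, (k u - (G.neighborSet u).encard) := by
  choose! A hAsub hAcard using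
    fun u hu => exists_subset_neighborSet_compl_encard_eq G u (hk u hu)
  let r : V → V → Prop := fun u v => u ∈ S ∧ v ∈ A u
  have hr : ∀ u ∈ S, {v | r u v} = A u := fun u hu => by simp [r, hu]
  refine ⟨G ⊔ SimpleGraph.fromRel r, le_sup_left, fun u hu => ?_, ?_⟩
  · calc (k u : ℕ∞)
        ≤ (G.neighborSet u).encard + (k u - (G.neighborSet u).encard) := le_add_tsub
      _ = (G.neighborSet u).encard + {v | r u v}.encard := by rw [hr u hu, hAcard u hu]
      _ ≤ ((G ⊔ SimpleGraph.fromRel r).neighborSet u).encard :=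
          encard_neighborSet_add_encard_le_sup_fromRel G ((hr u hu).trans_subset (hAsub u hu))
  · calc ((G ⊔ SimpleGraph.fromRel r).edgeSet \ G.edgeSet).encard
        ≤ (SimpleGraph.fromRel r).edgeSet.encard := by
          rw [SimpleGraph.edgeSet_sup, Set.union_sdiff_left]
          exact Set.encard_le_encard Set.sdiff_subset
      _ ≤ ∑ u ∈ S, {v | r u v}.encard := encard_edgeSet_fromRel_le_sum fun _ _ h => h.1
      _ = ∑ u ∈ S, (k u - (G.neighborSet u).encard) :=
          Finset.sum_congr rfl fun u hu => by rw [hr u hu, hAcard u hu]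

end

/-- upper bound on the number of edges that need to be added. For every finite
simple graph `G` of order `n` and positive `k ≤ ⌊(n-1)/2⌋`, there is a supergraph `G'` on the
same vertex set in which every vertex `u` with `1 ≤ deg_G u < k` has degree at least `k`,
obtained by adding at most `Σ_{u, 1 ≤ deg_G u < k} (k - deg_G u)` edges. -/
theorem stmt5 {V : Type*} [Fintype V] [DecidableEq V] (G : SimpleGraph V) [DecidableRel G.Adj]
    (k : ℕ) (hk : 0 < k) (hkn : k ≤ (Fintype.card V - 1) / 2) :
    ∃ G' : SimpleGraph V, G ≤ G' ∧
      (∀ u : V, 1 ≤ G.degree u → G.degree u < k → k ≤ G'.degree u) ∧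
      (G'.edgeFinset \ G.edgeFinset).card ≤
        ∑ u ∈ Finset.univ.filter (fun u => 1 ≤ G.degree u ∧ G.degree u < k),
          (k - G.degree u) := by
  have hcard : (k : ℕ∞) < ENat.card V := by
    rw [ENat.card_eq_coe_fintype_card, Nat.cast_lt]
    omega
  simpa [encard_neighborSet_eq_degree, encard_edgeSet_sdiff_edgeSet, ← Nat.cast_sum,
    ← ENat.natCast_sub] using
    stmt5_general G {u | 1 ≤ G.degree u ∧ G.degree u < k} (fun _ => k) fun _ _ => hcard
end

section
/- Let G = (V,E) be a finite simple graph of order n and let k be a positive integer with k ≤ ⌊(n−1)/2⌋. Then there exists a graph G'' = (V,E'') on the same vertex set with E'' ⊆ E such that every vertex u with n−k−1 < deg_G(u) ≤ n−2 satisfies deg_{G''}(u) ≤ n−k−1, and the number of removed edges satisfies |E ∖ E''| ≤ Σ_{u ∈ V, n−k−1 < deg_G(u) ≤ n−2} (deg_G(u) − (n−k−1)). -/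
open Finset
open scoped Classical

/-! Let every vertex discard as many incident edges as its degree exceeds the threshold. Edges
discarded at other vertices can only lower its degree further, and an edge discarded at both of
its ends is counted twice by the sum of the excesses but removed once. -/

theorem incidenceSet_deleteEdges {V : Type*} (G : SimpleGraph V) (s : Set (Sym2 V)) (u : V) :
    (G.deleteEdges s).incidenceSet u = G.incidenceSet u \ s := by
  ext e
  simp only [SimpleGraph.incidenceSet, SimpleGraph.edgeSet_deleteEdges, Set.mem_ofPred_eq,
    Set.mem_sdiff, and_right_comm]

theorem degree_deleteEdges_add_card_le {V : Type*} {G : SimpleGraph V} {s : Set (Sym2 V)} {u : V}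
    [Fintype (G.neighborSet u)] [Fintype ((G.deleteEdges s).neighborSet u)]
    {R : Finset (Sym2 V)} (hRG : ↑R ⊆ G.incidenceSet u) (hRs : ↑R ⊆ s) :
    (G.deleteEdges s).degree u + #R ≤ G.degree u := by
  have hdisj : Disjoint ((G.deleteEdges s).incidenceFinset u) R := by
    rw [← disjoint_coe, SimpleGraph.coe_incidenceFinset, incidenceSet_deleteEdges]
    exact Set.disjoint_sdiff_left.mono_right hRs
  have hsub : (G.deleteEdges s).incidenceFinset u ∪ R ⊆ G.incidenceFinset u := by
    rw [← coe_subset, coe_union, SimpleGraph.coe_incidenceFinset, SimpleGraph.coe_incidenceFinset,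
      incidenceSet_deleteEdges]
    exact Set.union_subset Set.sdiff_subset hRG
  simpa only [card_union_of_disjoint hdisj, SimpleGraph.card_incidenceFinset_eq_degree]
    using card_le_card hsub

theorem stmt7_general {V : Type*} (G : SimpleGraph V) [G.LocallyFinite] (S : Finset V)
    (d : V → ℕ) :
    ∃ H ≤ G, (∀ u ∈ S, ∀ [Fintype (H.neighborSet u)], H.degree u ≤ d u) ∧
      (G.edgeSet \ H.edgeSet).encard ≤ ↑(∑ u ∈ S, (G.degree u - d u)) := by
  have hexcess (u : V) : ∃ R ⊆ G.incidenceFinset u, #R = G.degree u - d u :=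
    exists_subset_card_eq <| by
      rw [SimpleGraph.card_incidenceFinset_eq_degree]
      exact Nat.sub_le _ _
  choose R hRG hRcard using hexcess
  let F : Finset (Sym2 V) := S.biUnion R
  refine ⟨G.deleteEdges F, G.deleteEdges_le _, fun u hu _ ↦ ?_, ?_⟩
  · have hRG' : ↑(R u) ⊆ G.incidenceSet u := by
      rw [← SimpleGraph.coe_incidenceFinset]
      exact coe_subset.2 (hRG u)
    have hRF : (R u : Set (Sym2 V)) ⊆ F := coe_subset.2 (subset_biUnion_of_mem R hu)
    have hdegree := degree_deleteEdges_add_card_le hRG' hRF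
    rw [hRcard u] at hdegree
    lia
  · have hFcard : #F ≤ ∑ u ∈ S, (G.degree u - d u) :=
      card_biUnion_le.trans_eq (sum_congr rfl fun u _ ↦ hRcard u)
    calc (G.edgeSet \ (G.deleteEdges F).edgeSet).encard
        ≤ (F : Set (Sym2 V)).encard := by
          rw [SimpleGraph.edgeSet_deleteEdges, sdiff_sdiff_right_self]
          exact Set.encard_le_encard Set.inter_subset_right
      _ = #F := Set.encard_coe_eq_coe_finsetCard F
      _ ≤ ↑(∑ u ∈ S, (G.degree u - d u)) := by exact_mod_cast hFcard

/-- upper bound on the number of edges that need to be removed. For every finite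
simple graph `G` of order `n` and positive `k ≤ ⌊(n-1)/2⌋`, there is a subgraph `G''` on the
same vertex set in which every vertex `u` with `n-k-1 < deg_G u ≤ n-2` has degree at most
`n-k-1`, obtained by removing at most `Σ_{u, n-k-1 < deg_G u ≤ n-2} (deg_G u - (n-k-1))`
edges. -/
theorem stmt7 {V : Type*} [Fintype V] [DecidableEq V] (G : SimpleGraph V) [DecidableRel G.Adj]
    (k : ℕ) (hk : 0 < k) (hkn : k ≤ (Fintype.card V - 1) / 2) :
    ∃ G'' : SimpleGraph V, G'' ≤ G ∧
      (∀ u : V, Fintype.card V - k - 1 < G.degree u → G.degree u ≤ Fintype.card V - 2 →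
        G''.degree u ≤ Fintype.card V - k - 1) ∧
      (G.edgeFinset \ G''.edgeFinset).card ≤
        ∑ u ∈ Finset.univ.filter
          (fun u => Fintype.card V - k - 1 < G.degree u ∧ G.degree u ≤ Fintype.card V - 2),
          (G.degree u - (Fintype.card V - k - 1)) := by
  obtain ⟨H, hle, hdegree, hcard⟩ := stmt7_general G
    {u | Fintype.card V - k - 1 < G.degree u ∧ G.degree u ≤ Fintype.card V - 2}
    fun _ ↦ Fintype.card V - k - 1
  exact ⟨H, hle, fun u hlow hhigh ↦ hdegree u (mem_filter_univ u |>.2 ⟨hlow, hhigh⟩), by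
    simpa only [← SimpleGraph.coe_edgeFinset, ← coe_sdiff, Set.encard_coe_eq_coe_finsetCard,
      Nat.cast_le] using hcard⟩
end
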